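/- For every n ≥ 2 and all a, b, c ∈ ℝⁿ, the simultaneous generalized cross product of a dyadic product from both sides satisfies b ×ₙ (a ⊗ c) ×ₙ b = (b ×ₙ a) ⊗ (c ×ₙ b) as n(n−1)/2 × n(n−1)/2 matrices. -/

import Mathlib

open Matrix BigOperators

/-- Index set `Pₙ = {(i,j) : 1 ≤ i < j ≤ n}` of strictly increasing pairs;
`ℝ^{n(n-1)/2}` is identified with `PairIdx n → ℝ`. -/
abbrev PairIdx (n : ℕ) := {p : Fin n × Fin n // p.1 < p.2}

/-- The generalized cross product `a ×ₙ b ∈ ℝ^{n(n-1)/2}`,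
with `(a ×ₙ b)_{(i,j)} = aᵢ bⱼ - aⱼ bᵢ` for `i < j`. -/
def crossN (n : ℕ) (a b : Fin n → ℝ) : PairIdx n → ℝ :=
  fun p => a p.1.1 * b p.1.2 - a p.1.2 * b p.1.1

/-- The matrix `⟦a⟧ₙ` with entries `⟦a⟧ₙ_{(i,j),k} = aᵢ δ_{jk} - aⱼ δ_{ik}`,
so that `⟦a⟧ₙ b = a ×ₙ b` for all `b`. -/
def crossMat (n : ℕ) (a : Fin n → ℝ) : Matrix (PairIdx n) (Fin n) ℝ :=
  Matrix.of fun p k =>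
    a p.1.1 * (if p.1.2 = k then 1 else 0) - a p.1.2 * (if p.1.1 = k then 1 else 0)

theorem mul_vecMulVec_mul_transpose {l m n o R : Type*} [Fintype m] [Fintype n]
    [NonUnitalCommSemiring R] (A : Matrix l m R) (u : m → R) (v : n → R) (B : Matrix o n R) :
    A * vecMulVec u v * Bᵀ = vecMulVec (A *ᵥ u) (B *ᵥ v) := by
  rw [mul_vecMulVec, vecMulVec_mul, vecMul_transpose]

theorem crossMat_mulVec {n : ℕ} (a b : Fin n → ℝ) : crossMat n a *ᵥ b = crossN n a b := by
  ext p
  simp [crossMat, crossN, mulVec, dotProduct, sub_mul, Finset.sum_sub_distrib]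

theorem neg_crossN {n : ℕ} (a b : Fin n → ℝ) : -crossN n a b = crossN n b a := by
  ext p
  simp only [crossN, Pi.neg_apply]
  ring

/-- simultaneous cross product of a dyadic product from both sides,
`b ×ₙ (a ⊗ c) ×ₙ b = (b ×ₙ a) ⊗ (c ×ₙ b)`, where `b ×ₙ P ×ₙ b := -⟦b⟧ₙ P ⟦b⟧ₙᵀ`. -/
theorem simultaneous_cross_dyadic (n : ℕ) (hn : 2 ≤ n) (a b c : Fin n → ℝ) :
    -(crossMat n b * vecMulVec a c * (crossMat n b)ᵀ)
      = vecMulVec (crossN n b a) (crossN n c b) := calc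
    -(crossMat n b * vecMulVec a c * (crossMat n b)ᵀ)
        = -vecMulVec (crossN n b a) (crossN n b c) := by
          rw [mul_vecMulVec_mul_transpose, crossMat_mulVec, crossMat_mulVec]
    _ = vecMulVec (crossN n b a) (crossN n c b) := by
          rw [← vecMulVec_neg, neg_crossN]
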